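/- arXiv:1911.12473 — 2 statements merged into one kernel-verified Lean document; each statement's English description precedes it below -/
import Mathlib

section
/- Let (Ω, 𝓕, μ) be a probability space, 𝒯 a standard Borel space, C a positive natural number, Z : Ω → 𝒯 measurable, and c*, c_t : Ω → Fin C measurable random variables such that condDistrib c* Z μ t = condDistrib c_t Z μ t for (μ.map Z)-almost every t. Let u : 𝒯 × Fin C → ℝ be bounded measurable, and let F : Ω → (Fin C → ℝ) be such that ω ↦ F ω (c* ω) and ω ↦ F ω (c_t ω) are integrable. Then E[F(c*) − F(c_t)] = E[F(c*) − u(Z, c*)] + E[u(Z, c_t) − F(c_t)]. -/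
open MeasureTheory ProbabilityTheory

section IdenticalLaws

variable {Ω Ω' S A E : Type*} [MeasurableSpace Ω] [MeasurableSpace Ω'] [MeasurableSpace S]
  [MeasurableSpace A] {μ : Measure Ω} {ν : Measure Ω'}

theorem identDistrib_prodMk_of_condDistrib_ae_eq [StandardBorelSpace A] [Nonempty A]
    [IsFiniteMeasure μ] [IsFiniteMeasure ν]
    {Z : Ω → S} {W : Ω' → S} {X : Ω → A} {Y : Ω' → A}
    (hZW : IdentDistrib Z W μ ν) (hX : AEMeasurable X μ) (hY : AEMeasurable Y ν)
    (hXY : condDistrib X Z μ =ᵐ[μ.map Z] condDistrib Y W ν) :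
    IdentDistrib (fun ω => (Z ω, X ω)) (fun ω => (W ω, Y ω)) μ ν where
  aemeasurable_fst := hZW.aemeasurable_fst.prodMk hX
  aemeasurable_snd := hZW.aemeasurable_snd.prodMk hY
  map_eq :=
    calc μ.map (fun ω => (Z ω, X ω))
      _ = μ.map Z ⊗ₘ condDistrib X Z μ := (compProd_map_condDistrib hX).symm
      _ = μ.map Z ⊗ₘ condDistrib Y W ν := Measure.compProd_congr hXY
      _ = ν.map W ⊗ₘ condDistrib Y W ν := by rw [hZW.map_eq]
      _ = ν.map (fun ω => (W ω, Y ω)) := compProd_map_condDistrib hY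

theorem integral_sub_eq_integral_sub_add_integral_sub_of_identDistrib
    [NormedAddCommGroup E] [NormedSpace ℝ E] [MeasurableSpace E] [BorelSpace E]
    {f g U V : Ω → E} (hf : Integrable f μ) (hg : Integrable g μ) (hU : Integrable U μ)
    (hUV : IdentDistrib U V μ μ) :
    ∫ ω, (f ω - g ω) ∂μ = (∫ ω, (f ω - U ω) ∂μ) + ∫ ω, (V ω - g ω) ∂μ := by
  have hV : Integrable V μ := hUV.integrable_iff.mp hU
  rw [integral_sub hf hg, integral_sub hf hU, integral_sub hV hg, hUV.integral_eq]
  abel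

end IdenticalLaws

theorem regret_decomposition_ucb_general
    {Ω S A E : Type*} [MeasurableSpace Ω] [MeasurableSpace S]
    [MeasurableSpace A] [StandardBorelSpace A] [Nonempty A]
    [NormedAddCommGroup E] [NormedSpace ℝ E] [CompleteSpace E] [MeasurableSpace E] [BorelSpace E]
    {μ : Measure Ω} [IsFiniteMeasure μ] {Z : Ω → S} {cstar ct : Ω → A}
    (hZ : AEMeasurable Z μ) (hcstar : AEMeasurable cstar μ) (hct : AEMeasurable ct μ)
    (hcond : condDistrib cstar Z μ =ᵐ[μ.map Z] condDistrib ct Z μ)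
    {u : S × A → E} (hu : Measurable u) (hu_int : Integrable (fun ω => u (Z ω, cstar ω)) μ)
    {F : Ω → A → E} (hFcstar : Integrable (fun ω => F ω (cstar ω)) μ)
    (hFct : Integrable (fun ω => F ω (ct ω)) μ) :
    ∫ ω, (F ω (cstar ω) - F ω (ct ω)) ∂μ
      = (∫ ω, (F ω (cstar ω) - u (Z ω, cstar ω)) ∂μ)
        + ∫ ω, (u (Z ω, ct ω) - F ω (ct ω)) ∂μ := by
  have hjoint : IdentDistrib (fun ω => (Z ω, cstar ω)) (fun ω => (Z ω, ct ω)) μ μ :=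
    identDistrib_prodMk_of_condDistrib_ae_eq (.refl hZ) hcstar hct hcond
  exact integral_sub_eq_integral_sub_add_integral_sub_of_identDistrib hFcstar hFct hu_int
    (hjoint.comp hu)

/-- Regret decomposition for Thompson sampling: if the optimal arm `cstar` and the
selected arm `ct` are identically distributed conditionally on the history `Z`,
then for any bounded measurable confidence-bound function `u` of the history and
the arm, `E[F(c*) − F(c_t)] = E[F(c*) − u(Z, c*)] + E[u(Z, c_t) − F(c_t)]`. -/
theorem regret_decomposition_ucb
    {Ω 𝒯 : Type*} [MeasurableSpace Ω]
    [MeasurableSpace 𝒯] [StandardBorelSpace 𝒯]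
    (μ : Measure Ω) [IsProbabilityMeasure μ]
    (C : ℕ) [NeZero C]
    (Z : Ω → 𝒯) (cstar ct : Ω → Fin C)
    (hZ : Measurable Z) (hcstar : Measurable cstar) (hct : Measurable ct)
    (hcond : ∀ᵐ t ∂(μ.map Z), condDistrib cstar Z μ t = condDistrib ct Z μ t)
    (u : 𝒯 × Fin C → ℝ) (hu : Measurable u)
    (M : ℝ) (hbound : ∀ p, |u p| ≤ M)
    (F : Ω → Fin C → ℝ)
    (hF1 : Integrable (fun ω => F ω (cstar ω)) μ)
    (hF2 : Integrable (fun ω => F ω (ct ω)) μ) :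
    ∫ ω, (F ω (cstar ω) - F ω (ct ω)) ∂μ
      = (∫ ω, (F ω (cstar ω) - u (Z ω, cstar ω)) ∂μ)
        + ∫ ω, (u (Z ω, ct ω) - F ω (ct ω)) ∂μ := by
  have hu_int : Integrable (fun ω => u (Z ω, cstar ω)) μ :=
    .of_bound (hu.comp (hZ.prodMk hcstar)).aestronglyMeasurable M (ae_of_all _ fun _ => hbound _)
  exact regret_decomposition_ucb_general hZ.aemeasurable hcstar.aemeasurable hct.aemeasurable hcond
    hu hu_int hF1 hF2
end

section
/- Let C be a natural number, let α be a real number with 0 ≤ α < 1, and let T_c : Fin C → ℕ with total T = ∑_{c} T_c satisfying T ≥ 1. Then ∑_{c} ∑_{t=1}^{T_c} √( (log t) / t^{1−α} ) ≤ 2 · √( C · T^{α+1} · log T ), where log is the natural logarithm, naturals are coerced to reals, and powers are real powers. -/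
open Finset

/-! Put `p = (α + 1) / 2`. Each summand is at most `√(log T) · t ^ (p - 1)`. Since `p ≥ 1 / 2`,
Bernoulli's inequality bounds `t ^ (p - 1) / 2` by the increment `t ^ p - (t - 1) ^ p`, so the sum
over `t ≤ n` telescopes to at most `2 √(log T) · n ^ p`. Cauchy–Schwarz and
`∑ x ^ (2 p) ≤ (∑ x) ^ (2 p)` bound the remaining sum over `c`. -/

lemma mul_rpow_sub_one_le_rpow_sub_rpow {p q x : ℝ} (hq0 : 0 ≤ q) (hq1 : q ≤ 1) (hqp : q ≤ p)
    (hx : 1 ≤ x) : q * x ^ (p - 1) ≤ x ^ p - (x - 1) ^ p := by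
  have hx0 : 0 < x := by positivity
  have hinv : x⁻¹ ≤ 1 := inv_le_one_of_one_le₀ hx
  have hratio : (1 + -x⁻¹) ^ p ≤ 1 + q * -x⁻¹ :=
    calc (1 + -x⁻¹) ^ p
        ≤ (1 + -x⁻¹) ^ q :=
          Real.rpow_le_rpow_of_exponent_ge' (by linarith) (by simp [hx0.le]) hq0 hqp
      _ ≤ 1 + q * -x⁻¹ := rpow_one_add_le_one_add_mul_self (by linarith) hq0 hq1
  have hscaled : (x - 1) ^ p ≤ x ^ p - q * x ^ (p - 1) :=
    calc (x - 1) ^ p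
        = x ^ p * (1 + -x⁻¹) ^ p := by
          rw [← Real.mul_rpow hx0.le (by linarith), mul_add, mul_neg, mul_inv_cancel₀ hx0.ne',
            mul_one, sub_eq_add_neg]
      _ ≤ x ^ p * (1 + q * -x⁻¹) := by gcongr
      _ = x ^ p - q * x ^ (p - 1) := by rw [Real.rpow_sub_one hx0.ne']; ring
  linarith

lemma mul_sum_Icc_rpow_sub_one_le {p q : ℝ} (hq0 : 0 ≤ q) (hq1 : q ≤ 1) (hqp : q ≤ p) (n : ℕ) :
    q * ∑ t ∈ Icc 1 n, (t : ℝ) ^ (p - 1) ≤ (n : ℝ) ^ p := by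
  induction n with
  | zero => simpa using Real.rpow_nonneg le_rfl p
  | succ n ih =>
    have hincr : q * ((n + 1 : ℕ) : ℝ) ^ (p - 1) ≤ ((n + 1 : ℕ) : ℝ) ^ p - (n : ℝ) ^ p := by
      simpa using mul_rpow_sub_one_le_rpow_sub_rpow hq0 hq1 hqp (x := (n + 1 : ℕ)) (by simp)
    rw [sum_Icc_succ_top (by lia), mul_add]
    linarith

lemma sqrt_div_rpow (a : ℝ) {x : ℝ} (hx : 0 ≤ x) (r : ℝ) : √(a / x ^ r) = √a * x ^ (-(r / 2)) := by
  rw [Real.sqrt_div' a (by positivity), Real.sqrt_eq_rpow (x ^ r), ← Real.rpow_mul hx,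
    mul_one_div, Real.rpow_neg hx, div_eq_mul_inv]

lemma sum_Icc_sqrt_div_rpow_le {α B : ℝ} (hα : 0 ≤ α) {n : ℕ} {a : ℕ → ℝ}
    (ha : ∀ t ∈ Icc 1 n, a t ≤ B) :
    ∑ t ∈ Icc 1 n, √(a t / (t : ℝ) ^ (1 - α)) ≤ 2 * √B * (n : ℝ) ^ ((α + 1) / 2) := by
  have hpow : (1 / 2) * ∑ t ∈ Icc 1 n, (t : ℝ) ^ ((α + 1) / 2 - 1) ≤ (n : ℝ) ^ ((α + 1) / 2) :=
    mul_sum_Icc_rpow_sub_one_le (by norm_num) (by norm_num) (by linarith) n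
  calc ∑ t ∈ Icc 1 n, √(a t / (t : ℝ) ^ (1 - α))
      = ∑ t ∈ Icc 1 n, √(a t) * (t : ℝ) ^ ((α + 1) / 2 - 1) := by
        refine sum_congr rfl fun t _ => ?_
        rw [sqrt_div_rpow _ t.cast_nonneg]
        ring_nf
    _ ≤ ∑ t ∈ Icc 1 n, √B * (t : ℝ) ^ ((α + 1) / 2 - 1) := by
        gcongr with t ht
        exact ha t ht
    _ = 2 * √B * ((1 / 2) * ∑ t ∈ Icc 1 n, (t : ℝ) ^ ((α + 1) / 2 - 1)) := by
        rw [← mul_sum]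
        ring
    _ ≤ 2 * √B * (n : ℝ) ^ ((α + 1) / 2) := by gcongr

section FiniteSums

variable {ι : Type*} {s : Finset ι} {f : ι → ℝ} {p : ℝ}

lemma sum_rpow_le_rpow_sum (hf : ∀ i ∈ s, 0 ≤ f i) (hp : 1 ≤ p) :
    ∑ i ∈ s, f i ^ p ≤ (∑ i ∈ s, f i) ^ p := by
  have hsplit {x : ℝ} (hx : 0 ≤ x) : x ^ p = x * x ^ (p - 1) := by
    rw [← Real.rpow_one_add' hx (by linarith), add_sub_cancel]
  calc ∑ i ∈ s, f i ^ p
      = ∑ i ∈ s, f i * f i ^ (p - 1) := sum_congr rfl fun i hi => hsplit (hf i hi)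
    _ ≤ ∑ i ∈ s, f i * (∑ j ∈ s, f j) ^ (p - 1) := by
        gcongr with i hi
        · exact hf i hi
        · exact hf i hi
        · exact single_le_sum hf hi
    _ = (∑ i ∈ s, f i) ^ p := by rw [← sum_mul, ← hsplit (sum_nonneg hf)]

lemma sum_rpow_half_le_sqrt_card_mul_rpow_sum (hf : ∀ i ∈ s, 0 ≤ f i) (hp : 1 ≤ p) :
    ∑ i ∈ s, f i ^ (p / 2) ≤ √(#s * (∑ i ∈ s, f i) ^ p) := by
  apply Real.le_sqrt_of_sq_le
  calc (∑ i ∈ s, f i ^ (p / 2)) ^ 2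
      ≤ #s * ∑ i ∈ s, (f i ^ (p / 2)) ^ 2 := sq_sum_le_card_mul_sum_sq
    _ = #s * ∑ i ∈ s, f i ^ p := by
        congr 1
        refine sum_congr rfl fun i hi => ?_
        rw [← Real.rpow_mul_natCast (hf i hi), Nat.cast_ofNat, div_mul_cancel₀ p two_ne_zero]
    _ ≤ #s * (∑ i ∈ s, f i) ^ p := by
        gcongr
        exact sum_rpow_le_rpow_sum hf hp

end FiniteSums

theorem sum_sqrt_log_div_rpow_le_general {ι : Type*} (s : Finset ι) {α : ℝ} (hα : 0 ≤ α)
    (N : ι → ℕ) {T : ℕ} (hT : T = ∑ i ∈ s, N i) :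
    ∑ i ∈ s, ∑ t ∈ Icc 1 (N i), √(Real.log t / (t : ℝ) ^ (1 - α))
      ≤ 2 * √(#s * (T : ℝ) ^ (α + 1) * Real.log T) := by
  have hlog : ∀ i ∈ s, ∀ t ∈ Icc 1 (N i), Real.log t ≤ Real.log T := by
    intro i hi t ht
    obtain ⟨ht1, htN⟩ := mem_Icc.mp ht
    have htT : t ≤ T := htN.trans (hT ▸ single_le_sum_of_canonicallyOrdered hi)
    gcongr
  have hcauchy : ∑ i ∈ s, (N i : ℝ) ^ ((α + 1) / 2) ≤ √(#s * (T : ℝ) ^ (α + 1)) := by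
    rw [hT, Nat.cast_sum]
    exact sum_rpow_half_le_sqrt_card_mul_rpow_sum (fun i _ => (N i).cast_nonneg) (by linarith)
  calc ∑ i ∈ s, ∑ t ∈ Icc 1 (N i), √(Real.log t / (t : ℝ) ^ (1 - α))
      ≤ ∑ i ∈ s, 2 * √(Real.log T) * (N i : ℝ) ^ ((α + 1) / 2) :=
        sum_le_sum fun i hi => sum_Icc_sqrt_div_rpow_le hα (hlog i hi)
    _ = 2 * √(Real.log T) * ∑ i ∈ s, (N i : ℝ) ^ ((α + 1) / 2) := by rw [mul_sum]
    _ ≤ 2 * √(Real.log T) * √(#s * (T : ℝ) ^ (α + 1)) := by gcongr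
    _ = 2 * √(#s * (T : ℝ) ^ (α + 1) * Real.log T) := by
        rw [Real.sqrt_mul (by positivity) (Real.log T)]
        ring

/-- Core analytic bound for the confidence-width sum in Lemma 1 (Bandit-BO):
`∑_c ∑_{t=1}^{T_c} √((log t) / t^{1−α}) ≤ 2 √(C · T^{α+1} · log T)`. -/
theorem sum_sqrt_log_div_rpow_le (C : ℕ) (α : ℝ) (hα0 : 0 ≤ α) (hα1 : α < 1)
    (Tc : Fin C → ℕ) (T : ℕ) (hT : T = ∑ c, Tc c) (hT1 : 1 ≤ T) :
    ∑ c, ∑ t ∈ Finset.Icc 1 (Tc c), Real.sqrt (Real.log t / (t : ℝ) ^ (1 - α))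
      ≤ 2 * Real.sqrt ((C : ℝ) * (T : ℝ) ^ (α + 1) * Real.log T) := by
  simpa using sum_sqrt_log_div_rpow_le_general univ hα0 Tc hT
end
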